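/- arXiv:1605.06182 — 9 statements merged into one kernel-verified Lean document; each statement's English description precedes it below -/
import Mathlib

section
/- The Stein divergence is invariant to inversion: for all n×n real symmetric positive definite matrices X and Y, δ_S²(X⁻¹, Y⁻¹) = δ_S²(X, Y). -/
open Matrix

/-- The Stein divergence `δ_S²(X,Y) = log det((X+Y)/2) − (1/2) log det(XY)`. -/
noncomputable def steinDiv {n : ℕ} (X Y : Matrix (Fin n) (Fin n) ℝ) : ℝ :=
  Real.log (((2 : ℝ)⁻¹ • (X + Y)).det) - (1 / 2) * Real.log ((X * Y).det)

/-- The Stein divergence is invariant to inversion: for symmetric positive definite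
`X` and `Y`, `δ_S²(X⁻¹, Y⁻¹) = δ_S²(X, Y)`. -/
theorem steinDiv_inv_invariant {n : ℕ}
    (X Y : Matrix (Fin n) (Fin n) ℝ) (hX : X.PosDef) (hY : Y.PosDef) :
    steinDiv X⁻¹ Y⁻¹ = steinDiv X Y := by
  have hx := hX.det_pos
  have hy := hY.det_pos
  have hs := (hX.add hY).det_pos
  have e : (2 : ℝ)⁻¹ • (X⁻¹ + Y⁻¹) = X⁻¹ * ((2 : ℝ)⁻¹ • (X + Y)) * Y⁻¹ := by
    rw [Matrix.mul_smul, Matrix.smul_mul, Matrix.mul_add, Matrix.add_mul,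
      Matrix.nonsing_inv_mul X (isUnit_iff_ne_zero.mpr hx.ne'), Matrix.mul_assoc X⁻¹ Y Y⁻¹,
      Matrix.mul_nonsing_inv Y (isUnit_iff_ne_zero.mpr hy.ne'), Matrix.one_mul, Matrix.mul_one,
      add_comm]
  have hd : ((2 : ℝ)⁻¹ • (X + Y)).det ≠ 0 := by
    rw [Matrix.det_smul]
    positivity
  unfold steinDiv
  rw [e]
  simp only [Matrix.det_mul, Matrix.det_nonsing_inv, Ring.inverse_eq_inv']
  rw [Real.log_mul (mul_ne_zero (inv_ne_zero hx.ne') hd) (inv_ne_zero hy.ne'),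
    Real.log_mul (inv_ne_zero hx.ne') hd,
    Real.log_mul (inv_ne_zero hx.ne') (inv_ne_zero hy.ne'), Real.log_mul hx.ne' hy.ne',
    Real.log_inv, Real.log_inv]
  ring
end

section
/- For all n×n real symmetric positive definite matrices X and Y, det((X+Y)/2) ≥ √(det X · det Y), with equality if and only if X = Y. -/
open Matrix

open scoped MatrixOrder in
/-- Simultaneous diagonalization by congruence. -/
theorem exists_simul_diag {n : ℕ}
    (X Y : Matrix (Fin n) (Fin n) ℝ) (hX : X.PosDef) (hY : Y.PosDef) :
    ∃ (S : Matrix (Fin n) (Fin n) ℝ) (d : Fin n → ℝ), (∀ i, 0 < d i) ∧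
      X = Sᴴ * S ∧ Y = Sᴴ * diagonal d * S := by
  obtain ⟨B, hB⟩ := CStarAlgebra.nonneg_iff_eq_star_mul_self.mp hX.posSemidef.nonneg
  rw [star_eq_conjTranspose] at hB
  have hBu : IsUnit B.det := by
    have h := hX.det_pos
    rw [hB, det_mul] at h
    exact isUnit_iff_ne_zero.mpr (fun h0 => by simp [h0] at h)
  have hBi : IsUnit B⁻¹ := by
    rw [isUnit_iff_isUnit_det]
    exact isUnit_nonsing_inv_det B hBu
  have hC : (B⁻¹ᴴ * Y * B⁻¹).PosDef :=
    hY.conjTranspose_mul_mul_same (mulVec_injective_of_isUnit hBi)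
  have hs := hC.1.spectral_theorem
  rw [Unitary.conjStarAlgAut_apply] at hs
  set U : Matrix (Fin n) (Fin n) ℝ := (hC.1.eigenvectorUnitary : Matrix (Fin n) (Fin n) ℝ) with hU
  have hUU : U * Uᴴ = 1 :=
    Unitary.coe_mul_star_self hC.1.eigenvectorUnitary
  refine ⟨Uᴴ * B, hC.1.eigenvalues, hC.eigenvalues_pos, ?_, ?_⟩
  · rw [conjTranspose_mul, conjTranspose_conjTranspose, Matrix.mul_assoc, ← Matrix.mul_assoc U, hUU,
      Matrix.one_mul, hB]
  · have h1 : Y = Bᴴ * (B⁻¹ᴴ * Y * B⁻¹) * B := by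
      have e1 : B⁻¹ * B = 1 := nonsing_inv_mul B hBu
      have e2 : Bᴴ * B⁻¹ᴴ = 1 := by rw [← conjTranspose_mul, e1, conjTranspose_one]
      calc Y = (Bᴴ * B⁻¹ᴴ) * Y * (B⁻¹ * B) := by rw [e1, e2, Matrix.one_mul, Matrix.mul_one]
        _ = _ := by simp only [Matrix.mul_assoc]
    have h2 : B⁻¹ᴴ * Y * B⁻¹ = U * diagonal hC.1.eigenvalues * Uᴴ := hs
    rw [h2] at h1
    rw [conjTranspose_mul, conjTranspose_conjTranspose]
    refine h1.trans ?_
    simp only [Matrix.mul_assoc]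

/-- For symmetric positive definite `X` and `Y`,
`det((X+Y)/2) ≥ √(det X · det Y)`, with equality if and only if `X = Y`. -/
theorem det_half_add_ge_sqrt_det_mul_det {n : ℕ}
    (X Y : Matrix (Fin n) (Fin n) ℝ) (hX : X.PosDef) (hY : Y.PosDef) :
    Real.sqrt (X.det * Y.det) ≤ ((2 : ℝ)⁻¹ • (X + Y)).det ∧
      (((2 : ℝ)⁻¹ • (X + Y)).det = Real.sqrt (X.det * Y.det) ↔ X = Y) := by
  obtain ⟨S, d, hd, rfl, rfl⟩ := exists_simul_diag X Y hX hY
  have hSpos : 0 < S.det * S.det := by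
    have := hX.det_pos
    simpa [det_mul, det_conjTranspose] using this
  have hL : ((2 : ℝ)⁻¹ • (Sᴴ * S + Sᴴ * diagonal d * S)).det
      = S.det * S.det * ∏ i, (1 + d i) / 2 := by
    have : (2 : ℝ)⁻¹ • (Sᴴ * S + Sᴴ * diagonal d * S)
        = Sᴴ * diagonal (fun i => (1 + d i) / 2) * S := by
      have : diagonal (fun i => (1 + d i) / 2) = (2 : ℝ)⁻¹ • (1 + diagonal d) := by
        rw [← diagonal_one, diagonal_add, ← diagonal_smul]
        congr 1
        ext i
        simp only [Pi.smul_apply, smul_eq_mul]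
        ring
      rw [this]
      simp [Matrix.mul_add, Matrix.add_mul]
    rw [this, det_mul, det_mul, det_diagonal, det_conjTranspose, star_trivial]
    ring
  have hR : Real.sqrt ((Sᴴ * S).det * (Sᴴ * diagonal d * S).det)
      = S.det * S.det * ∏ i, Real.sqrt (d i) := by
    rw [← Real.sqrt_prod _ (fun i _ => (hd i).le), det_mul, det_mul, det_mul, det_diagonal,
      det_conjTranspose, star_trivial,
      show S.det * S.det * (S.det * (∏ i, d i) * S.det) = (S.det * S.det) ^ 2 * ∏ i, d i by ring,
      Real.sqrt_mul (by positivity), Real.sqrt_sq hSpos.le]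
  have hle : ∀ i, Real.sqrt (d i) ≤ (1 + d i) / 2 := fun i => by
    nlinarith [Real.sq_sqrt (hd i).le, sq_nonneg (Real.sqrt (d i) - 1)]
  rw [hL, hR]
  refine ⟨mul_le_mul_of_nonneg_left
    (Finset.prod_le_prod (fun i _ => Real.sqrt_nonneg _) fun i _ => hle i) hSpos.le, ?_, ?_⟩
  · intro h
    have h := mul_left_cancel₀ hSpos.ne' h
    have hone : d = fun _ => 1 := by
      by_contra hne
      obtain ⟨i, hi⟩ := Function.ne_iff.mp hne
      have hlt : Real.sqrt (d i) < (1 + d i) / 2 := by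
        have h1 : Real.sqrt (d i) - 1 ≠ 0 := fun h0 => hi (by
          have := Real.sq_sqrt (hd i).le
          rw [sub_eq_zero.mp h0] at this
          linarith)
        have := sq_pos_of_ne_zero h1
        nlinarith [Real.sq_sqrt (hd i).le]
      exact absurd h (Finset.prod_lt_prod (fun i _ => Real.sqrt_pos.mpr (hd i))
        (fun i _ => hle i) ⟨i, Finset.mem_univ i, hlt⟩).ne'
    rw [hone, diagonal_one, Matrix.mul_one]
  · intro h
    rw [← hL, ← hR, ← h, ← two_smul ℝ, smul_smul]
    rw [inv_mul_cancel₀ two_ne_zero, one_smul, Real.sqrt_mul_self hX.det_pos.le]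
end

section
/- The Stein divergence is non-negative and definite: for all n×n real symmetric positive definite matrices X and Y, δ_S²(X,Y) ≥ 0, and δ_S²(X,Y) = 0 if and only if X = Y. -/
open Matrix

open scoped MatrixOrder in
/-- Simultaneous diagonalization by congruence. -/
theorem stein_exists_congr {n : ℕ} (X Y : Matrix (Fin n) (Fin n) ℝ)
    (hX : X.PosDef) (hY : Y.PosDef) :
    ∃ (W : Matrix (Fin n) (Fin n) ℝ) (d : Fin n → ℝ), W.det ≠ 0 ∧ (∀ i, 0 < d i) ∧
      X = Wᴴ * W ∧ Y = Wᴴ * diagonal d * W := by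
  obtain ⟨B, hB, hXB⟩ := CStarAlgebra.isStrictlyPositive_iff_eq_star_mul_self.mp
    hX.isStrictlyPositive
  rw [star_eq_conjTranspose] at hXB
  have hBd : IsUnit B.det := (isUnit_iff_isUnit_det B).mp hB
  have hBi : IsUnit B⁻¹ := by
    rw [isUnit_iff_isUnit_det]; exact isUnit_nonsing_inv_det B hBd
  have hZ : (B⁻¹ᴴ * Y * B⁻¹).PosDef :=
    hY.conjTranspose_mul_mul_same (mulVec_injective_iff_isUnit.mpr hBi)
  have hs := hZ.1.spectral_theorem
  set U : Matrix (Fin n) (Fin n) ℝ := (hZ.1.eigenvectorUnitary : Matrix (Fin n) (Fin n) ℝ) with hU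
  have hUU : U * Uᴴ = 1 := by
    rw [← star_eq_conjTranspose]; exact Unitary.coe_mul_star_self hZ.1.eigenvectorUnitary
  have hs' : B⁻¹ᴴ * Y * B⁻¹ = U * diagonal hZ.1.eigenvalues * Uᴴ := by
    rw [Unitary.conjStarAlgAut_apply] at hs
    exact hs
  have hdU : U.det * Uᴴ.det = 1 := by rw [← det_mul, hUU, det_one]
  have hinv : B⁻¹ * B = 1 := nonsing_inv_mul B hBd
  have hinv' : Bᴴ * B⁻¹ᴴ = 1 := by rw [← conjTranspose_mul, hinv, conjTranspose_one]
  refine ⟨Uᴴ * B, hZ.1.eigenvalues, ?_, hZ.eigenvalues_pos, ?_, ?_⟩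
  · rw [det_mul]
    exact mul_ne_zero (right_ne_zero_of_mul_eq_one hdU) hBd.ne_zero
  · rw [conjTranspose_mul, conjTranspose_conjTranspose, Matrix.mul_assoc, ← Matrix.mul_assoc U,
      hUU, Matrix.one_mul, hXB]
  · calc Y = (Bᴴ * B⁻¹ᴴ) * Y * (B⁻¹ * B) := by rw [hinv, hinv', Matrix.one_mul, Matrix.mul_one]
      _ = Bᴴ * (B⁻¹ᴴ * Y * B⁻¹) * B := by simp only [Matrix.mul_assoc]
      _ = Bᴴ * (U * diagonal hZ.1.eigenvalues * Uᴴ) * B :=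
        congrArg (fun M => Bᴴ * M * B) hs'
      _ = _ := by
        rw [conjTranspose_mul, conjTranspose_conjTranspose]
        simp only [Matrix.mul_assoc]

/-- The scalar inequality. -/
theorem stein_scalar (d : ℝ) (hd : 0 < d) :
    0 ≤ Real.log ((1 + d) / 2) - (1 / 2) * Real.log d ∧
      (Real.log ((1 + d) / 2) - (1 / 2) * Real.log d = 0 → d = 1) := by
  have hp : 0 < (1 + d) / 2 := by positivity
  have h2 : Real.log (((1 + d) / 2) ^ 2) = 2 * Real.log ((1 + d) / 2) := by
    rw [Real.log_pow]; norm_num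
  constructor
  · have : Real.log d ≤ Real.log (((1 + d) / 2) ^ 2) :=
      Real.log_le_log hd (by nlinarith [sq_nonneg (d - 1)])
    linarith
  · intro h
    have h3 : Real.log d = Real.log (((1 + d) / 2) ^ 2) := by linarith
    have h4 := Real.log_injOn_pos (Set.mem_Ioi.mpr hd) (Set.mem_Ioi.mpr (by positivity)) h3
    have : (d - 1) ^ 2 = 0 := by nlinarith
    have := pow_eq_zero_iff (two_ne_zero) |>.mp this
    linarith

theorem stein_formula {n : ℕ} (W : Matrix (Fin n) (Fin n) ℝ) (d : Fin n → ℝ)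
    (hW : W.det ≠ 0) (hd : ∀ i, 0 < d i) :
    steinDiv (Wᴴ * W) (Wᴴ * diagonal d * W) =
      ∑ i, (Real.log ((1 + d i) / 2) - (1 / 2) * Real.log (d i)) := by
  have h1 : (2 : ℝ)⁻¹ • (Wᴴ * W + Wᴴ * diagonal d * W)
      = Wᴴ * diagonal (fun i => (1 + d i) / 2) * W := by
    have : diagonal (fun i => (1 + d i) / 2) = (2 : ℝ)⁻¹ • ((1 : Matrix (Fin n) (Fin n) ℝ) + diagonal d) := by
      rw [← diagonal_one, diagonal_add, ← diagonal_smul]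
      congr 1; ext i; simp; ring
    rw [this]
    simp [Matrix.mul_add, Matrix.add_mul]
  have hWt : Wᴴ.det = W.det := by rw [det_conjTranspose]; simp
  have hp1 : ∏ i, (1 + d i) / 2 ≠ 0 :=
    Finset.prod_ne_zero_iff.mpr fun i _ => by have := hd i; positivity
  have hp2 : ∏ i, d i ≠ 0 := Finset.prod_ne_zero_iff.mpr fun i _ => (hd i).ne'
  unfold steinDiv
  rw [h1]
  simp only [det_mul, hWt, det_diagonal]
  rw [Real.log_mul (mul_ne_zero hW hp1) hW, Real.log_mul hW hp1,
    Real.log_mul (mul_ne_zero hW hW) (mul_ne_zero (mul_ne_zero hW hp2) hW),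
    Real.log_mul (mul_ne_zero hW hp2) hW, Real.log_mul hW hp2, Real.log_mul hW hW,
    Real.log_prod (fun i _ => by have := hd i; positivity),
    Real.log_prod (fun i _ => (hd i).ne'), Finset.sum_sub_distrib, ← Finset.mul_sum]
  ring

/-- The Stein divergence is non-negative and definite: for symmetric positive definite
`X` and `Y`, `δ_S²(X,Y) ≥ 0`, and `δ_S²(X,Y) = 0` if and only if `X = Y`. -/
theorem steinDiv_nonneg_and_definite {n : ℕ}
    (X Y : Matrix (Fin n) (Fin n) ℝ) (hX : X.PosDef) (hY : Y.PosDef) :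
    0 ≤ steinDiv X Y ∧ (steinDiv X Y = 0 ↔ X = Y) := by
  refine ⟨?_, ?_, ?_⟩
  · obtain ⟨W, d, hW, hd, rfl, rfl⟩ := stein_exists_congr X Y hX hY
    rw [stein_formula W d hW hd]
    exact Finset.sum_nonneg fun i _ => (stein_scalar _ (hd i)).1
  · obtain ⟨W, d, hW, hd, rfl, rfl⟩ := stein_exists_congr X Y hX hY
    rw [stein_formula W d hW hd,
      Finset.sum_eq_zero_iff_of_nonneg fun i _ => (stein_scalar _ (hd i)).1]
    intro h
    have : d = fun _ => 1 := funext fun i =>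
      (stein_scalar _ (hd i)).2 (h i (Finset.mem_univ i))
    rw [this, diagonal_one, Matrix.mul_one]
  · rintro rfl
    have h : (2 : ℝ)⁻¹ • (X + X) = X := by
      rw [← two_smul ℝ X, smul_smul]; norm_num
    have hne := hX.det_pos.ne'
    unfold steinDiv
    rw [h, det_mul, Real.log_mul hne hne]
    ring
end

section
/- The function X ↦ −log det(X) is strictly convex on the convex set of n×n real symmetric positive definite matrices; that is, for distinct symmetric positive definite X and Y and t ∈ (0,1), −log det(tX + (1−t)Y) < −t log det(X) − (1−t) log det(Y). -/
open Matrix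

open scoped MatrixOrder in
theorem aux_factor {n : ℕ} (Y : Matrix (Fin n) (Fin n) ℝ) (hY : Y.PosDef) :
    ∃ S : Matrix (Fin n) (Fin n) ℝ, Y = Sᴴ * S := by
  have h : 0 ≤ Y := Matrix.nonneg_iff_posSemidef.2 hY.posSemidef
  obtain ⟨S, hS⟩ := CStarAlgebra.nonneg_iff_eq_star_mul_self.1 h
  exact ⟨S, hS⟩

theorem aux_simul {n : ℕ} (X Y : Matrix (Fin n) (Fin n) ℝ) (hX : X.PosDef) (hY : Y.PosDef) :
    ∃ (P : Matrix (Fin n) (Fin n) ℝ) (d : Fin n → ℝ), (∀ i, 0 < d i) ∧ P.det ≠ 0 ∧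
      X = Pᴴ * diagonal d * P ∧ Y = Pᴴ * P := by
  obtain ⟨S, hS⟩ := aux_factor Y hY
  have hdet : S.det ≠ 0 := by
    intro h
    have := hY.det_pos
    rw [hS, det_mul, h, mul_zero] at this
    exact lt_irrefl _ this
  have hu : IsUnit S.det := isUnit_iff_ne_zero.2 hdet
  have hSi : S⁻¹ * S = 1 := nonsing_inv_mul S hu
  have hSi' : Sᴴ * S⁻¹ᴴ = 1 := by rw [← conjTranspose_mul, hSi, conjTranspose_one]
  have hZ : (S⁻¹ᴴ * X * S⁻¹).PosDef := by
    apply hX.conjTranspose_mul_mul_same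
    apply mulVec_injective_of_isUnit
    rw [Matrix.isUnit_nonsing_inv_iff, Matrix.isUnit_iff_isUnit_det]
    exact hu
  have hXZ : X = Sᴴ * (S⁻¹ᴴ * X * S⁻¹) * S := by
    calc X = (Sᴴ * S⁻¹ᴴ) * X * (S⁻¹ * S) := by rw [hSi, hSi', one_mul, mul_one]
      _ = _ := by simp only [Matrix.mul_assoc]
  set Z := S⁻¹ᴴ * X * S⁻¹ with hZdef
  have hsp := hZ.1.spectral_theorem
  rw [Unitary.conjStarAlgAut_apply] at hsp
  set U := hZ.1.eigenvectorUnitary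
  have hU : (U : Matrix (Fin n) (Fin n) ℝ) * star (U : Matrix (Fin n) (Fin n) ℝ) = 1 :=
    Unitary.coe_mul_star_self U
  set V := (U : Matrix (Fin n) (Fin n) ℝ)
  have hPP : Y = (star V * S)ᴴ * (star V * S) := by
    rw [conjTranspose_mul, star_eq_conjTranspose, conjTranspose_conjTranspose]
    calc Y = Sᴴ * (V * star V) * S := by rw [hU, mul_one, hS]
      _ = _ := by simp only [Matrix.mul_assoc, star_eq_conjTranspose]
  refine ⟨star V * S, hZ.1.eigenvalues, hZ.eigenvalues_pos, ?_, ?_, hPP⟩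
  · intro h
    have := hY.det_pos
    rw [hPP, det_mul, h, mul_zero] at this
    exact lt_irrefl _ this
  · rw [conjTranspose_mul, star_eq_conjTranspose, conjTranspose_conjTranspose]
    calc X = Sᴴ * Z * S := hXZ
      _ = Sᴴ * (V * diagonal hZ.1.eigenvalues * star V) * S := by
        congr 2
      _ = _ := by simp only [Matrix.mul_assoc, star_eq_conjTranspose]

theorem aux_logdet {n : ℕ} (P : Matrix (Fin n) (Fin n) ℝ) (hP : P.det ≠ 0) (d : Fin n → ℝ)
    (hd : ∀ i, 0 < d i) :
    Real.log (Pᴴ * diagonal d * P).det = Real.log (P.det * P.det) + ∑ i, Real.log (d i) := by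
  have h : (Pᴴ * diagonal d * P).det = (P.det * P.det) * ∏ i, d i := by
    rw [det_mul, det_mul, det_conjTranspose, det_diagonal, star_trivial]; ring
  rw [h, Real.log_mul (mul_ne_zero hP hP) (Finset.prod_ne_zero_iff.2 fun i _ => (hd i).ne'),
    Real.log_prod fun i _ => (hd i).ne']

/-- The function `X ↦ −log det X` is strictly convex on the set of real symmetric
positive definite matrices: for distinct positive definite `X`, `Y` and `t ∈ (0,1)`,
`−log det(tX + (1−t)Y) < −t log det X − (1−t) log det Y`. -/
theorem neg_log_det_strictConvexOn {n : ℕ}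
    (X Y : Matrix (Fin n) (Fin n) ℝ) (hX : X.PosDef) (hY : Y.PosDef) (hXY : X ≠ Y)
    (t : ℝ) (ht0 : 0 < t) (ht1 : t < 1) :
    -Real.log ((t • X + (1 - t) • Y).det) <
      -t * Real.log X.det - (1 - t) * Real.log Y.det := by
  obtain ⟨P, d, hd, hP, hXP, hYP⟩ := aux_simul X Y hX hY
  have hYP' : Y = Pᴴ * diagonal (fun _ => (1 : ℝ)) * P := by
    rw [diagonal_one, mul_one, hYP]
  have hC : t • X + (1 - t) • Y = Pᴴ * diagonal (fun i => t * d i + (1 - t) * 1) * P := by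
    have : diagonal (fun i => t * d i + (1 - t) * 1)
        = t • diagonal d + (1 - t) • diagonal (fun _ : Fin n => (1 : ℝ)) := by
      rw [← diagonal_smul, ← diagonal_smul, diagonal_add]
      rfl
    rw [this, mul_add, add_mul, mul_smul_comm, mul_smul_comm, smul_mul_assoc, smul_mul_assoc,
      ← hXP, ← hYP']
  have hne : ∃ i, d i ≠ 1 := by
    by_contra! h
    exact hXY (by rw [hXP, hYP', funext h])
  have ht1' : 0 < 1 - t := by linarith
  have hkey : ∀ i, d i ≠ 1 → t * Real.log (d i) < Real.log (t * d i + (1 - t) * 1) := by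
    intro i hi
    have := strictConcaveOn_log_Ioi.2 (Set.mem_Ioi.2 (hd i)) (Set.mem_Ioi.2 one_pos) hi ht0 ht1'
      (by ring)
    simpa using this
  have hlt : ∑ i, t * Real.log (d i) < ∑ i, Real.log (t * d i + (1 - t) * 1) := by
    obtain ⟨i, hi⟩ := hne
    refine Finset.sum_lt_sum (fun j _ => ?_) ⟨i, Finset.mem_univ _, hkey i hi⟩
    by_cases hj : d j = 1
    · simp [hj]
    · exact (hkey j hj).le
  rw [← Finset.mul_sum] at hlt
  have e1 := aux_logdet P hP _ (fun i => show 0 < t * d i + (1 - t) * 1 by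
    have := mul_pos ht0 (hd i); linarith)
  have e2 := aux_logdet P hP d hd
  have e3 := aux_logdet P hP (fun _ => (1 : ℝ)) (fun _ => one_pos)
  rw [← hC] at e1
  rw [← hXP] at e2
  rw [← hYP'] at e3
  simp only [Real.log_one, Finset.sum_const_zero, add_zero] at e3
  rw [e1, e2, e3]
  linarith
end

section
/- Uniqueness of the positive definite solution of the Riccati equation: let A and B be n×n real symmetric positive definite matrices. If X₁ and X₂ are symmetric positive definite matrices with X₁AX₁ = B and X₂AX₂ = B, then X₁ = X₂. -/
open Matrix

open scoped MatrixOrder Matrix.Norms.L2Operator in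
lemma psd_sq_unique {n : ℕ} (P Q : Matrix (Fin n) (Fin n) ℝ) (hP : P.PosSemidef)
    (hQ : Q.PosSemidef) (h : P * P = Q * Q) : P = Q := by
  have hp : 0 ≤ P := hP.nonneg
  have hq : 0 ≤ Q := hQ.nonneg
  rw [← CFC.sqrt_unique h hp, CFC.sqrt_mul_self Q hq]

open scoped MatrixOrder in
lemma posdef_factor {n : ℕ} (A : Matrix (Fin n) (Fin n) ℝ) (hA : A.PosDef) :
    ∃ C : Matrix (Fin n) (Fin n) ℝ, A = Cᴴ * C := by
  obtain ⟨C, hC⟩ := CStarAlgebra.nonneg_iff_eq_star_mul_self.mp hA.posSemidef.nonneg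
  exact ⟨C, hC⟩


/-- Uniqueness of the positive definite solution of the Riccati equation: if `A` and `B`
are symmetric positive definite and `X₁`, `X₂` are symmetric positive definite matrices
with `X₁ A X₁ = B` and `X₂ A X₂ = B`, then `X₁ = X₂`. -/
theorem riccati_solution_unique {n : ℕ}
    (A B X₁ X₂ : Matrix (Fin n) (Fin n) ℝ) (hA : A.PosDef) (hB : B.PosDef)
    (hX₁ : X₁.PosDef) (hX₂ : X₂.PosDef)
    (h₁ : X₁ * A * X₁ = B) (h₂ : X₂ * A * X₂ = B) :
    X₁ = X₂ := by

  obtain ⟨C, hC⟩ := posdef_factor A hA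
  have hu : IsUnit (Cᴴ * C) := hC ▸ hA.isUnit
  have hCu : IsUnit C := by
    rw [Matrix.isUnit_iff_isUnit_det] at hu ⊢
    rw [Matrix.det_mul] at hu
    exact isUnit_of_mul_isUnit_right hu
  have hCu' : IsUnit Cᴴ := hCu.star
  have key : C * X₁ * Cᴴ = C * X₂ * Cᴴ := by
    refine psd_sq_unique _ _ (hX₁.posSemidef.mul_mul_conjTranspose_same C)
      (hX₂.posSemidef.mul_mul_conjTranspose_same C) ?_
    have e : ∀ X : Matrix (Fin n) (Fin n) ℝ,
        C * X * Cᴴ * (C * X * Cᴴ) = C * (X * A * X) * Cᴴ := by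
      intro X
      rw [hC]
      simp only [Matrix.mul_assoc]
    rw [e, e, h₁, h₂]
  exact hCu.mul_left_cancel (hCu'.mul_right_cancel key)
end

section
/- Closed-form Fréchet mean under the Jeffrey divergence: let X₁,…,X_p be n×n real symmetric positive definite matrices, and set L = Σᵢ Xᵢ⁻¹ and Γ = Σᵢ Xᵢ. Then the matrix M* = L^{-1/2}(L^{1/2} Γ L^{1/2})^{1/2} L^{-1/2} is symmetric positive definite and minimizes the function M ↦ Σᵢ δ_J²(Xᵢ, M) over all n×n real symmetric positive definite matrices M; that is, Σᵢ δ_J²(Xᵢ, M*) ≤ Σᵢ δ_J²(Xᵢ, M) for every symmetric positive definite M. -/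
open Matrix Finset

/-- The Jeffrey divergence `δ_J²(X,Y) = (1/2)Tr(X⁻¹Y) + (1/2)Tr(Y⁻¹X) − n`. -/
noncomputable def jeffreyDiv {n : ℕ} (X Y : Matrix (Fin n) (Fin n) ℝ) : ℝ :=
  (1 / 2) * (X⁻¹ * Y).trace + (1 / 2) * (Y⁻¹ * X).trace - n

theorem sum_posDef_aux {n p : ℕ} (hne : (univ : Finset (Fin p)).Nonempty)
    {X : Fin p → Matrix (Fin n) (Fin n) ℝ} (hX : ∀ i, (X i).PosDef) : (∑ i, X i).PosDef :=
  posDef_sum hne fun i _ => hX i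

/-- Closed-form Fréchet mean under the Jeffrey divergence: given symmetric positive
definite matrices `X₁,…,X_p`, set `L = Σᵢ Xᵢ⁻¹` and `Γ = Σᵢ Xᵢ`. If `SL` is the
(unique) symmetric positive semidefinite square root of `L` (i.e. `SL * SL = L`) and `T`
the symmetric positive semidefinite square root of `SL * Γ * SL`, then
`M* = L^{-1/2}(L^{1/2} Γ L^{1/2})^{1/2} L^{-1/2} = SL⁻¹ * T * SL⁻¹` is symmetric
positive definite and minimizes `M ↦ Σᵢ δ_J²(Xᵢ, M)` over all symmetric positive
definite matrices `M`. -/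
theorem jeffrey_frechet_mean_closed_form {n p : ℕ} (hp : 0 < p)
    (X : Fin p → Matrix (Fin n) (Fin n) ℝ) (hX : ∀ i, (X i).PosDef)
    (SL T : Matrix (Fin n) (Fin n) ℝ)
    (hSL : SL.PosSemidef) (hSL2 : SL * SL = ∑ i, (X i)⁻¹)
    (hT : T.PosSemidef) (hT2 : T * T = SL * (∑ i, X i) * SL) :
    (SL⁻¹ * T * SL⁻¹).PosDef ∧
      ∀ M : Matrix (Fin n) (Fin n) ℝ, M.PosDef →
        ∑ i, jeffreyDiv (X i) (SL⁻¹ * T * SL⁻¹) ≤ ∑ i, jeffreyDiv (X i) M := by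
  have hne : (univ : Finset (Fin p)).Nonempty := ⟨⟨0, hp⟩, mem_univ _⟩
  have hL : (∑ i, (X i)⁻¹).PosDef := sum_posDef_aux hne fun i => (hX i).inv
  have hG : (∑ i, X i).PosDef := sum_posDef_aux hne hX
  have hSd : IsUnit SL.det := by
    have h := hL.det_pos
    rw [← hSL2, det_mul] at h
    rw [isUnit_iff_ne_zero]
    rintro h0
    simp [h0] at h
  have hTd : IsUnit T.det := by
    have h : T.det * T.det = SL.det * (∑ i, X i).det * SL.det := by
      rw [← det_mul, hT2, det_mul, det_mul]
    rw [isUnit_iff_ne_zero]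
    rintro h0
    rw [h0, zero_mul] at h
    have h1 := hG.det_pos.ne'
    have h2 := hSd.ne_zero
    exact (mul_ne_zero (mul_ne_zero h2 h1) h2) h.symm
  have hTp : T.PosDef := hT.posDef_iff_isUnit.2 ((isUnit_iff_isUnit_det T).2 hTd)
  have hSp : SL.PosDef := hSL.posDef_iff_isUnit.2 ((isUnit_iff_isUnit_det SL).2 hSd)
  have conj : ∀ A B : Matrix (Fin n) (Fin n) ℝ, A.PosDef → B.PosDef → (B * A * B).PosDef := by
    intro A B hA hB
    have h := hA.conjTranspose_mul_mul_same (B := B)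
      (mulVec_injective_iff_isUnit.2 hB.isUnit)
    rwa [hB.isHermitian.eq] at h
  have hMs : (SL⁻¹ * T * SL⁻¹).PosDef := conj _ _ hTp hSp.inv
  refine ⟨hMs, ?_⟩
  have key : ∀ M : Matrix (Fin n) (Fin n) ℝ, ∑ i, jeffreyDiv (X i) M =
      (1 / 2) * ((SL * M * SL).trace + ((SL * M * SL)⁻¹ * (T * T)).trace) - p * n := by
    intro M
    have h1 : (SL * M * SL).trace = ∑ i, ((X i)⁻¹ * M).trace := by
      rw [trace_mul_comm, ← Matrix.mul_assoc, hSL2, Finset.sum_mul, trace_sum]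
    have h2 : ((SL * M * SL)⁻¹ * (T * T)).trace = ∑ i, (M⁻¹ * X i).trace := by
      rw [hT2, Matrix.mul_inv_rev, Matrix.mul_inv_rev, ← trace_sum, ← Finset.mul_sum, ← Matrix.mul_assoc,
        trace_mul_comm]
      congr 1
      simp only [Matrix.mul_assoc]
      rw [mul_nonsing_inv_cancel_left _ _ hSd, nonsing_inv_mul_cancel_left _ _ hSd]
    rw [h1, h2]
    simp only [jeffreyDiv, sum_sub_distrib, sum_add_distrib, ← Finset.mul_sum]
    simp
    ring
  intro M hM
  rw [key, key]
  have hN : SL * (SL⁻¹ * T * SL⁻¹) * SL = T := by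
    simp only [Matrix.mul_assoc]
    rw [mul_nonsing_inv_cancel_left _ _ hSd, nonsing_inv_mul _ hSd, Matrix.mul_one]
  rw [hN, nonsing_inv_mul_cancel_left _ _ hTd]
  have hNp := conj M SL hM hSp
  generalize SL * M * SL = N at hNp
  have hNd : IsUnit N.det := (isUnit_iff_isUnit_det N).1 hNp.isUnit
  have hpos := (hNp.inv.posSemidef.conjTranspose_mul_mul_same (N - T)).trace_nonneg
  have he : (N - T)ᴴ * N⁻¹ * (N - T) = N - T - T + T * N⁻¹ * T := by
    rw [conjTranspose_sub, hNp.isHermitian.eq, hT.isHermitian.eq, Matrix.sub_mul,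
      mul_nonsing_inv _ hNd, Matrix.sub_mul, Matrix.one_mul, Matrix.mul_sub (T * N⁻¹),
      Matrix.mul_assoc T N⁻¹ N, nonsing_inv_mul _ hNd, Matrix.mul_one]
    abel
  have ht : (T * N⁻¹ * T).trace = (N⁻¹ * (T * T)).trace := by
    rw [Matrix.mul_assoc, trace_mul_comm, Matrix.mul_assoc]
  rw [he, trace_add, trace_sub, trace_sub, ht] at hpos
  linarith
end

section
/- Let X be an n×n real symmetric positive definite matrix and W an n×m real matrix such that WᵀXW is invertible. Then the map W ↦ log det(WᵀXW), viewed as a map on n×m real matrices, is Fréchet differentiable at W with derivative given by H ↦ 2 Tr((WᵀXW)⁻¹ Wᵀ X H); equivalently, the matrix of partial derivatives of log det(WᵀXW) with respect to the entries of W equals 2XW(WᵀXW)⁻¹. -/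
open Matrix

attribute [local instance] Matrix.normedAddCommGroup Matrix.normedSpace

/-- The continuous linear map `H ↦ 2 Tr((WᵀXW)⁻¹ Wᵀ X H)`. -/
noncomputable def logDetDerivative {n m : ℕ} (X : Matrix (Fin n) (Fin n) ℝ)
    (W : Matrix (Fin n) (Fin m) ℝ) :
    Matrix (Fin n) (Fin m) ℝ →L[ℝ] ℝ :=
  LinearMap.toContinuousLinearMap
    { toFun := fun H => 2 * ((Wᵀ * X * W)⁻¹ * (Wᵀ * X * H)).trace
      map_add' := fun H₁ H₂ => by simp [Matrix.mul_add]; ring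
      map_smul' := fun c H => by simp [Matrix.mul_smul]; ring }

theorem differentiable_entry {n m : ℕ} (i : Fin n) (j : Fin m) :
    Differentiable ℝ (fun V : Matrix (Fin n) (Fin m) ℝ => V i j) := by
  have h : Differentiable ℝ (fun V : Fin n → Fin m → ℝ => V i j) := by fun_prop
  exact h

theorem differentiable_det_matrix {m : ℕ} :
    Differentiable ℝ (fun A : Matrix (Fin m) (Fin m) ℝ => A.det) := by
  simp only [Matrix.det_apply']
  have := fun i j => @differentiable_entry m m i j
  fun_prop

theorem differentiable_conj {n m : ℕ} (X : Matrix (Fin n) (Fin n) ℝ) :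
    Differentiable ℝ (fun V : Matrix (Fin n) (Fin m) ℝ => (Vᵀ * X * V).det) := by
  simp only [Matrix.det_apply', Matrix.mul_apply, Matrix.transpose_apply]
  have := fun i j => @differentiable_entry n m i j
  fun_prop

theorem hasDerivAt_det_line {m : ℕ} (A K : Matrix (Fin m) (Fin m) ℝ) (hA : IsUnit A.det) :
    HasDerivAt (fun t : ℝ => (A + t • K).det) (A.det * (A⁻¹ * K).trace) 0 := by
  have h1 : ∀ t : ℝ, (A + t • K).det = A.det * (1 + t • (A⁻¹ * K)).det := by
    intro t
    rw [← Matrix.det_mul, Matrix.mul_add, Matrix.mul_smul, Matrix.mul_nonsing_inv_cancel_left _ _ hA,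
      Matrix.mul_one]
  have h2 : ∀ t : ℝ, (A + t • K).det = A.det * _ := fun t =>
    (h1 t).trans (congrArg (A.det * ·) (Matrix.det_one_add_smul t (A⁻¹ * K)))
  rw [funext h2]
  apply HasDerivAt.const_mul
  set p := (Polynomial.divX (Polynomial.divX (1 + (Polynomial.X : Polynomial ℝ) •
    (A⁻¹ * K).map Polynomial.C).det))
  have h := (((hasDerivAt_id (0:ℝ)).const_mul (A⁻¹ * K).trace).const_add 1).add
    ((p.hasDerivAt 0).mul ((hasDerivAt_id (0:ℝ)).pow 2))
  convert! h using 1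
  simp

theorem fderiv_det_apply {m : ℕ} (A K : Matrix (Fin m) (Fin m) ℝ) (hA : IsUnit A.det) :
    fderiv ℝ (fun A : Matrix (Fin m) (Fin m) ℝ => A.det) A K = A.det * (A⁻¹ * K).trace := by
  have hl : HasDerivAt (fun t : ℝ => A + t • K) K 0 := by
    have := ((hasDerivAt_id (0:ℝ)).smul_const K).const_add A
    rw [one_smul] at this
    exact this
  have hd : HasFDerivAt (fun A : Matrix (Fin m) (Fin m) ℝ => A.det)
      (fderiv ℝ (fun A : Matrix (Fin m) (Fin m) ℝ => A.det) A) (A + (0:ℝ) • K) := by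
    rw [zero_smul, add_zero]
    exact (differentiable_det_matrix A).hasFDerivAt
  exact (hd.comp_hasDerivAt (0:ℝ) hl).unique (hasDerivAt_det_line A K hA)

theorem fderiv_conj_apply {n m : ℕ} (X : Matrix (Fin n) (Fin n) ℝ)
    (W H : Matrix (Fin n) (Fin m) ℝ) (hW : IsUnit (Wᵀ * X * W).det) :
    fderiv ℝ (fun V : Matrix (Fin n) (Fin m) ℝ => (Vᵀ * X * V).det) W H =
      (Wᵀ * X * W).det * ((Wᵀ * X * W)⁻¹ * (Hᵀ * X * W + Wᵀ * X * H)).trace := by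
  have hl : HasDerivAt (fun t : ℝ => W + t • H) H 0 := by
    have := ((hasDerivAt_id (0:ℝ)).smul_const H).const_add W
    rw [one_smul] at this
    exact this
  have hd : HasFDerivAt (fun V : Matrix (Fin n) (Fin m) ℝ => (Vᵀ * X * V).det)
      (fderiv ℝ (fun V : Matrix (Fin n) (Fin m) ℝ => (Vᵀ * X * V).det) W) (W + (0:ℝ) • H) := by
    rw [zero_smul, add_zero]
    exact (differentiable_conj X W).hasFDerivAt
  have h1 := hd.comp_hasDerivAt (0:ℝ) hl
  set A := Wᵀ * X * W with hAdef
  set K := Hᵀ * X * W + Wᵀ * X * H with hK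
  have hc : HasDerivAt (fun t : ℝ => A + t • K + (t ^ 2) • (Hᵀ * X * H)) K 0 := by
    have := (((hasDerivAt_id (0:ℝ)).smul_const K).const_add A).add
      (((hasDerivAt_id (0:ℝ)).pow 2).smul_const (Hᵀ * X * H))
    convert! this using 1
    simp
  have hd2 : HasFDerivAt (fun A : Matrix (Fin m) (Fin m) ℝ => A.det)
      (fderiv ℝ (fun A : Matrix (Fin m) (Fin m) ℝ => A.det) A)
      (A + (0:ℝ) • K + ((0:ℝ) ^ 2) • (Hᵀ * X * H)) := by
    have : A + (0:ℝ) • K + ((0:ℝ) ^ 2) • (Hᵀ * X * H) = A := by simp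
    rw [this]
    exact (differentiable_det_matrix A).hasFDerivAt
  have h2 := hd2.comp_hasDerivAt (0:ℝ) hc
  rw [← fderiv_det_apply A K hW]
  refine h1.unique ?_
  convert! h2 using 1
  funext t
  simp only [Function.comp]
  congr 1
  simp only [hAdef, hK, Matrix.transpose_add, Matrix.transpose_smul, Matrix.add_mul,
    Matrix.mul_add, Matrix.smul_mul, Matrix.mul_smul, smul_add, smul_smul, pow_two]
  abel

/-- Let `X` be an `n × n` real symmetric positive definite matrix and `W` an `n × m`
real matrix such that `WᵀXW` is invertible. Then `W ↦ log det(WᵀXW)` is Fréchet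
differentiable at `W` with derivative `H ↦ 2 Tr((WᵀXW)⁻¹ Wᵀ X H)`; equivalently, the
matrix of partial derivatives equals `2XW(WᵀXW)⁻¹`, i.e. the derivative in direction `H`
is `Tr((2XW(WᵀXW)⁻¹)ᵀ H)`. -/
theorem hasFDerivAt_log_det_conj {n m : ℕ}
    (X : Matrix (Fin n) (Fin n) ℝ) (hX : X.PosDef)
    (W : Matrix (Fin n) (Fin m) ℝ) (hW : IsUnit (Wᵀ * X * W).det) :
    HasFDerivAt (fun V : Matrix (Fin n) (Fin m) ℝ => Real.log ((Vᵀ * X * V).det))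
      (logDetDerivative X W) W ∧
    ∀ H : Matrix (Fin n) (Fin m) ℝ,
      logDetDerivative X W H = (((2 : ℝ) • (X * W * (Wᵀ * X * W)⁻¹))ᵀ * H).trace := by
  have hXt : Xᵀ = X := by
    have := hX.isHermitian.eq
    rwa [Matrix.conjTranspose_eq_transpose_of_trivial] at this
  have hAt : (Wᵀ * X * W)ᵀ = Wᵀ * X * W := by
    simp [Matrix.transpose_mul, hXt, Matrix.mul_assoc]
  have hval : ∀ H, logDetDerivative X W H = 2 * ((Wᵀ * X * W)⁻¹ * (Wᵀ * X * H)).trace :=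
    fun H => rfl
  refine ⟨?_, ?_⟩
  · have h := (differentiable_conj X W).hasFDerivAt.log hW.ne_zero
    convert! h using 1
    ext1 H
    rw [hval]
    have e : ((Wᵀ * X * W)⁻¹ * (Hᵀ * X * W)).trace = ((Wᵀ * X * W)⁻¹ * (Wᵀ * X * H)).trace := by
      rw [← Matrix.trace_transpose, Matrix.transpose_mul, Matrix.transpose_nonsing_inv, hAt,
        Matrix.trace_mul_comm]
      simp [Matrix.transpose_mul, hXt, Matrix.mul_assoc]
    change _ = (Wᵀ * X * W).det⁻¹ *
      fderiv ℝ (fun V : Matrix (Fin n) (Fin m) ℝ => (Vᵀ * X * V).det) W H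
    rw [fderiv_conj_apply X W H hW, Matrix.mul_add, Matrix.trace_add, e,
      inv_mul_cancel_left₀ hW.ne_zero]
    ring
  · intro H
    rw [hval, Matrix.transpose_smul, Matrix.smul_mul, Matrix.trace_smul, smul_eq_mul,
      Matrix.transpose_mul, Matrix.transpose_nonsing_inv, hAt, Matrix.transpose_mul, hXt]
    simp only [Matrix.mul_assoc]
end

section
/- Asymptotic equality of the AIRM and Jeffrey divergences at the identity along diagonal directions: let ν ∈ ℝⁿ be nonzero. Then lim_{t→0} [t² Σᵢ νᵢ²] / [(1/2)Σᵢ exp(tνᵢ) + (1/2)Σᵢ exp(−tνᵢ) − n] = 2. Here the numerator equals δ_R²(Iₙ, Diag(exp(tνᵢ))) and the denominator equals δ_J²(Iₙ, Diag(exp(tνᵢ))). -/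
open Filter Topology

theorem aux_slope (a : ℝ) :
    Tendsto (fun t : ℝ => Real.sinh (t * a / 2) / t) (𝓝[≠] 0) (𝓝 (a / 2)) := by
  have h1 : HasDerivAt (fun t : ℝ => t * a / 2) (a / 2) 0 := by
    simpa using ((hasDerivAt_id (0 : ℝ)).mul_const a).div_const 2
  have h := h1.sinh
  rw [hasDerivAt_iff_tendsto_slope] at h
  have h2 : Real.cosh (0 * a / 2) * (a / 2) = a / 2 := by simp
  rw [h2] at h
  refine h.congr fun t => ?_
  simp [slope_def_field]

theorem aux_half (x : ℝ) :
    (1 / 2) * Real.exp x + (1 / 2) * Real.exp (-x) - 1 = 2 * Real.sinh (x / 2) ^ 2 := by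
  have h1 : Real.exp x = Real.exp (x / 2) ^ 2 := by
    rw [← Real.exp_nat_mul]; congr 1; push_cast; ring
  have h2 : Real.exp (-x) = Real.exp (-(x / 2)) ^ 2 := by
    rw [← Real.exp_nat_mul]; congr 1; push_cast; ring
  have h3 : Real.exp (x / 2) * Real.exp (-(x / 2)) = 1 := by
    rw [← Real.exp_add]; simp
  rw [Real.sinh_eq, h1, h2]
  linear_combination h3

/-- Asymptotic equality of the AIRM and Jeffrey divergences at the identity along
diagonal directions: for a nonzero `ν ∈ ℝⁿ`,
`lim_{t→0} [t² Σᵢ νᵢ²] / [(1/2)Σᵢ exp(tνᵢ) + (1/2)Σᵢ exp(−tνᵢ) − n] = 2`.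
The numerator is `δ_R²(Iₙ, Diag(exp(tνᵢ)))` and the denominator is
`δ_J²(Iₙ, Diag(exp(tνᵢ)))`. -/
theorem airm_jeffrey_limit {n : ℕ} (ν : Fin n → ℝ) (hν : ν ≠ 0) :
    Tendsto
      (fun t : ℝ =>
        (t ^ 2 * ∑ i, (ν i) ^ 2) /
          ((1 / 2) * ∑ i, Real.exp (t * ν i) +
            (1 / 2) * ∑ i, Real.exp (-(t * ν i)) - n))
      (𝓝[≠] 0) (𝓝 2) := by
  have hS : ∑ i, (ν i) ^ 2 ≠ 0 := by
    intro h
    apply hν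
    rw [Finset.sum_eq_zero_iff_of_nonneg (fun i _ => sq_nonneg (ν i))] at h
    funext i
    simpa using h i (Finset.mem_univ i)
  have hlim : Tendsto (fun t : ℝ => ∑ i, 2 * (Real.sinh (t * ν i / 2) / t) ^ 2) (𝓝[≠] 0)
      (𝓝 (∑ i, 2 * (ν i / 2) ^ 2)) :=
    tendsto_finsetSum _ fun i _ => ((aux_slope (ν i)).pow 2).const_mul 2
  have hval : ∑ i, 2 * (ν i / 2) ^ 2 = (∑ i, (ν i) ^ 2) / 2 := by
    rw [Finset.sum_div]
    exact Finset.sum_congr rfl fun i _ => by ring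
  rw [hval] at hlim
  have hq := (tendsto_const_nhds (x := ∑ i, (ν i) ^ 2)).div hlim (by simpa using hS)
  have h2 : (∑ i, (ν i) ^ 2) / ((∑ i, (ν i) ^ 2) / 2) = 2 := by field_simp
  rw [h2] at hq
  refine hq.congr' ?_
  filter_upwards [self_mem_nhdsWithin] with t ht
  have ht : t ≠ 0 := ht
  have hD : (1 / 2) * ∑ i, Real.exp (t * ν i) +
      (1 / 2) * ∑ i, Real.exp (-(t * ν i)) - n
      = t ^ 2 * ∑ i, 2 * (Real.sinh (t * ν i / 2) / t) ^ 2 := by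
    have hn : (n : ℝ) = ∑ _i : Fin n, (1 : ℝ) := by simp
    rw [hn, Finset.mul_sum, Finset.mul_sum, Finset.mul_sum, ← Finset.sum_add_distrib,
      ← Finset.sum_sub_distrib]
    refine Finset.sum_congr rfl fun i _ => ?_
    rw [aux_half]
    field_simp
  rw [hD]
  exact (mul_div_mul_left _ _ (pow_ne_zero 2 ht)).symm
end

section
/- Asymptotic equality of the AIRM and Stein divergences at the identity along diagonal directions: let ν ∈ ℝⁿ be nonzero. Then lim_{t→0} [t² Σᵢ νᵢ²] / [Σᵢ log((1 + exp(tνᵢ))/2) − (t/2) Σᵢ νᵢ] = 8. Here the numerator equals δ_R²(Iₙ, Diag(exp(tνᵢ))) and the denominator equals δ_S²(Iₙ, Diag(exp(tνᵢ))). -/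
open Filter Topology

/-- One-coordinate second order expansion of the Stein divergence. -/
theorem stein_coord_limit (a : ℝ) :
    Tendsto (fun t : ℝ => (Real.log ((1 + Real.exp (t * a)) / 2) - t / 2 * a) / t ^ 2)
      (𝓝[≠] 0) (𝓝 (a ^ 2 / 8)) := by
  have hE : ∀ t : ℝ, HasDerivAt (fun t : ℝ => Real.exp (t * a)) (Real.exp (t * a) * a) t := by
    intro t
    have h := ((hasDerivAt_id t).mul_const a).exp
    simpa using h
  have hF : ∀ t : ℝ, HasDerivAt
      (fun t : ℝ => Real.log ((1 + Real.exp (t * a)) / 2) - t / 2 * a)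
      (a * (Real.exp (t * a) / (1 + Real.exp (t * a))) - a / 2) t := by
    intro t
    have hp := Real.exp_pos (t * a)
    have h1 := (((hE t).const_add 1).div_const 2).log (by positivity)
    have h2 := ((hasDerivAt_id t).div_const 2).mul_const a
    refine (h1.sub h2).congr_deriv ?_
    field_simp
  have hF2 : HasDerivAt (fun t : ℝ => a * (Real.exp (t * a) / (1 + Real.exp (t * a))) - a / 2)
      (a ^ 2 / 4) 0 := by
    have hp := Real.exp_pos (0 * a)
    have h := (((hE 0).div ((hE 0).const_add 1) (by positivity)).const_mul a).sub_const (a / 2)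
    refine h.congr_deriv ?_
    simp
    ring
  refine HasDerivAt.lhopital_zero_nhdsNE (g' := fun t : ℝ => 2 * t)
    (Eventually.of_forall hF) (Eventually.of_forall fun t => ?_) ?_ ?_ ?_ ?_
  · simpa using hasDerivAt_pow 2 t
  · filter_upwards [self_mem_nhdsWithin] with t ht
    exact mul_ne_zero two_ne_zero ht
  · have h := (hF 0).continuousAt.tendsto
    simp at h
    exact h.mono_left nhdsWithin_le_nhds
  · have h := (hasDerivAt_pow 2 (0 : ℝ)).continuousAt.tendsto
    simp at h
    exact h.mono_left nhdsWithin_le_nhds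
  · have h := (hasDerivAt_iff_tendsto_slope.1 hF2).div_const 2
    have e : a ^ 2 / 4 / 2 = a ^ 2 / 8 := by ring
    rw [e] at h
    refine h.congr' ?_
    filter_upwards [self_mem_nhdsWithin] with t ht
    have ht' : t ≠ 0 := ht
    rw [slope_def_field]
    simp
    field_simp
    ring

/-- Asymptotic equality of the AIRM and Stein divergences at the identity along
diagonal directions: for a nonzero `ν ∈ ℝⁿ`,
`lim_{t→0} [t² Σᵢ νᵢ²] / [Σᵢ log((1 + exp(tνᵢ))/2) − (t/2) Σᵢ νᵢ] = 8`.
The numerator is `δ_R²(Iₙ, Diag(exp(tνᵢ)))` and the denominator is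
`δ_S²(Iₙ, Diag(exp(tνᵢ)))`. -/
theorem airm_stein_limit {n : ℕ} (ν : Fin n → ℝ) (hν : ν ≠ 0) :
    Tendsto
      (fun t : ℝ =>
        (t ^ 2 * ∑ i, (ν i) ^ 2) /
          ((∑ i, Real.log ((1 + Real.exp (t * ν i)) / 2)) - (t / 2) * ∑ i, ν i))
      (𝓝[≠] 0) (𝓝 8) := by
  have hpos : 0 < ∑ i, (ν i) ^ 2 := by
    obtain ⟨j, hj⟩ := Function.ne_iff.1 hν
    have hj' : ν j ≠ 0 := hj
    exact Finset.sum_pos' (fun i _ => sq_nonneg _) ⟨j, Finset.mem_univ j, by positivity⟩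
  have h1 := tendsto_finsetSum Finset.univ (fun i _ => stein_coord_limit (ν i))
  have hne : ∑ i, (ν i) ^ 2 / 8 ≠ 0 := by
    rw [← Finset.sum_div]
    positivity
  have h2 := (tendsto_const_nhds (x := ∑ i, (ν i) ^ 2)).div h1 hne
  have e : (∑ i, (ν i) ^ 2) / (∑ i, (ν i) ^ 2 / 8) = 8 := by
    rw [← Finset.sum_div]
    field_simp
  rw [e] at h2
  refine h2.congr' ?_
  filter_upwards [self_mem_nhdsWithin] with t ht
  have ht' : t ≠ 0 := ht
  simp only [Pi.div_apply]
  rw [← Finset.sum_div, Finset.sum_sub_distrib, ← Finset.mul_sum, div_div_eq_mul_div,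
    mul_comm (t ^ 2)]
end
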